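/- Assume 0 < V₀ < ∞, and let λ : (0, V₀) → ℝ be the tie function assigning to each V₁ ∈ (0, V₀) the unique λ(V₁) > V₁ with μ(V₁, λ(V₁)) = 0. Then λ(V₁) → ∞ as V₁ → V₀⁻; that is, the tie function blows up to infinity at the finite blowup time. -/

import Mathlib

open Filter Set

/-- The perimeter difference μ(V₁,V₂) between the triple interval and the double
interval, expressed via the equilibrium point Ṽ = Vt V₁ V₂. -/
noncomputable def mu (f : ℝ → ℝ) (Vt : ℝ → ℝ → ℝ) (V₁ V₂ : ℝ) : ℝ :=
  2 * f (V₁ / 2) + 2 * f ((V₁ + V₂) / 2)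
    - f (Vt V₁ V₂) - f (Vt V₁ V₂ + V₁) - f (Vt V₁ V₂ + V₁ + V₂)

/-- The set S whose supremum is the blowup time V₀. -/
noncomputable def blowupSet (f : ℝ → ℝ) (Vt : ℝ → ℝ → ℝ) : Set ℝ :=
  {W : ℝ | 0 < W ∧ ∃ V₂ : ℝ, W ≤ V₂ ∧ mu f Vt W V₂ < 0}

/-! Write `T V₁ V₂` for the perimeter of the triple interval at equilibrium. Convexity makes the
equilibrium position a minimiser, so `T` lies below the perimeter of any displaced triple interval;
the equilibrium condition makes the displacement drop out of the tangent inequality, so `T` also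
lies above its tangent plane. Squeezed between the two, `T` is differentiable in each variable, with
`∂T/∂V₂ = f' (Ṽ + V₁ + V₂)`. Since `Ṽ > -(V₁ + V₂) / 2` when `V₁ < V₂`, the derivative
`∂μ/∂V₂ = f' ((V₁ + V₂) / 2) - f' (Ṽ + V₁ + V₂)` is negative there.

If `μ V₀ M` were negative for some `M > V₀`, continuity in the first variable would put points above
`V₀` into the blowup set. So `μ V₀ M ≥ 0` for all `M > V₀`, hence `μ V₀ M > 0` by strict
monotonicity. By continuity `μ V₁ M > 0` for `V₁` near `V₀`, which forces `λ V₁ > M`. -/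

open scoped Topology

/-- The position `x` of the leftmost endpoint of two adjacent intervals of volumes `V₁` and `V₂`
is an equilibrium: the perimeter is stationary under translation. -/
def IsEquilibrium (f : ℝ → ℝ) (x V₁ V₂ : ℝ) : Prop :=
  deriv f x + deriv f (x + V₁) + deriv f (x + V₁ + V₂) = 0

/-- The perimeter of the triple interval: the density `f` summed over the three endpoints of two
adjacent intervals of volumes `V₁` and `V₂`, the leftmost endpoint being `x`. -/
def triplePerimeter (f : ℝ → ℝ) (x V₁ V₂ : ℝ) : ℝ :=
  f x + f (x + V₁) + f (x + V₁ + V₂)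

lemma hasFDerivAt_of_le_of_le {E : Type*} [NormedAddCommGroup E] [NormedSpace ℝ E]
    {l g u : E → ℝ} {g' : E →L[ℝ] ℝ} {x : E}
    (hl : HasFDerivAt l g' x) (hu : HasFDerivAt u g' x)
    (hlg : ∀ᶠ y in 𝓝 x, l y ≤ g y) (hgu : ∀ᶠ y in 𝓝 x, g y ≤ u y)
    (hlx : l x = g x) (hux : u x = g x) : HasFDerivAt g g' x := by
  rw [hasFDerivAt_iff_isLittleO, Asymptotics.isLittleO_iff] at hl hu ⊢
  intro ε hε
  filter_upwards [hl hε, hu hε, hlg, hgu] with y hly huy hlgy hguy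
  rw [Real.norm_eq_abs, abs_le] at hly huy ⊢
  constructor <;> linarith

lemma add_deriv_mul_sub_le_of_convexOn {S : Set ℝ} {f : ℝ → ℝ} {x y : ℝ} (hf : ConvexOn ℝ S f)
    (hx : x ∈ S) (hy : y ∈ S) (hfx : DifferentiableAt ℝ f x) :
    f x + deriv f x * (y - x) ≤ f y := by
  rcases lt_trichotomy x y with hxy | rfl | hyx
  · have hslope := hf.deriv_le_slope hx hy hxy hfx
    rw [slope_def_field, le_div_iff₀ (sub_pos.2 hxy)] at hslope
    linarith
  · simp
  · have hslope := hf.slope_le_deriv hy hx hyx hfx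
    rw [slope_def_field, div_le_iff₀ (sub_pos.2 hyx)] at hslope
    linarith

lemma odd_deriv_of_even {f : ℝ → ℝ} (hf : f.Even) : (deriv f).Odd := by
  intro x
  have hcomp := deriv_comp_neg f x
  rw [funext hf] at hcomp
  rw [hcomp, neg_neg]

namespace IsEquilibrium

variable {f : ℝ → ℝ} {x V₁ V₂ : ℝ}

lemma triplePerimeter_add_le (hx : IsEquilibrium f x V₁ V₂) (hconv : ConvexOn ℝ univ f)
    (hdiff : Differentiable ℝ f) (y W₁ W₂ : ℝ) :
    triplePerimeter f x V₁ V₂ + (deriv f (x + V₁) + deriv f (x + V₁ + V₂)) * (W₁ - V₁)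
      + deriv f (x + V₁ + V₂) * (W₂ - V₂) ≤ triplePerimeter f y W₁ W₂ := by
  have tangent (p q : ℝ) : f p + deriv f p * (q - p) ≤ f q :=
    add_deriv_mul_sub_le_of_convexOn hconv (mem_univ p) (mem_univ q) (hdiff p)
  have displacement :
      (deriv f x + deriv f (x + V₁) + deriv f (x + V₁ + V₂)) * (y - x) = 0 := by
    rw [hx, zero_mul]
  unfold triplePerimeter
  linarith [tangent x y, tangent (x + V₁) (y + W₁), tangent (x + V₁ + V₂) (y + W₁ + W₂)]

lemma triplePerimeter_le (hx : IsEquilibrium f x V₁ V₂) (hconv : ConvexOn ℝ univ f)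
    (hdiff : Differentiable ℝ f) (y : ℝ) :
    triplePerimeter f x V₁ V₂ ≤ triplePerimeter f y V₁ V₂ := by
  simpa only [sub_self, mul_zero, add_zero] using hx.triplePerimeter_add_le hconv hdiff y V₁ V₂

lemma neg_half_add_lt (hx : IsEquilibrium f x V₁ V₂) (heven : f.Even)
    (hmono : StrictMono (deriv f)) (hV : V₁ < V₂) : -((V₁ + V₂) / 2) < x := by
  by_contra! hle
  have hodd := odd_deriv_of_even heven
  have left : deriv f x ≤ -deriv f ((V₁ + V₂) / 2) := hodd _ ▸ hmono.monotone hle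
  have middle : deriv f (x + V₁) < 0 := hodd.map_zero ▸ hmono (by linarith)
  have right : deriv f (x + V₁ + V₂) ≤ deriv f ((V₁ + V₂) / 2) := hmono.monotone (by linarith)
  unfold IsEquilibrium at hx
  linarith

end IsEquilibrium

section PerimeterDifference

variable {f : ℝ → ℝ} {Vt : ℝ → ℝ → ℝ} {V₁ V₂ : ℝ}

lemma mu_eq_sub_triplePerimeter (f : ℝ → ℝ) (Vt : ℝ → ℝ → ℝ) (V₁ V₂ : ℝ) :
    mu f Vt V₁ V₂
      = 2 * f (V₁ / 2) + 2 * f ((V₁ + V₂) / 2) - triplePerimeter f (Vt V₁ V₂) V₁ V₂ := by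
  unfold mu triplePerimeter
  ring

lemma hasDerivAt_triplePerimeter_left (hconv : ConvexOn ℝ univ f) (hdiff : Differentiable ℝ f)
    (hVt : ∀ W, 0 < W → IsEquilibrium f (Vt W V₂) W V₂) (hV₁ : 0 < V₁) :
    HasDerivAt (fun W => triplePerimeter f (Vt W V₂) W V₂)
      (deriv f (Vt V₁ V₂ + V₁) + deriv f (Vt V₁ V₂ + V₁ + V₂)) V₁ := by
  set x := Vt V₁ V₂ with hx
  have lower : HasDerivAt (fun W => triplePerimeter f x V₁ V₂
      + (deriv f (x + V₁) + deriv f (x + V₁ + V₂)) * (W - V₁))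
      (deriv f (x + V₁) + deriv f (x + V₁ + V₂)) V₁ := by
    simpa using (((hasDerivAt_id V₁).sub_const V₁).const_mul
      (deriv f (x + V₁) + deriv f (x + V₁ + V₂))).const_add (triplePerimeter f x V₁ V₂)
  have upper : HasDerivAt (fun W => triplePerimeter f x W V₂)
      (deriv f (x + V₁) + deriv f (x + V₁ + V₂)) V₁ :=
    (((hdiff _).hasDerivAt.comp_const_add x V₁).const_add (f x)).add
      (((hdiff _).hasDerivAt.comp_add_const (x + V₁) V₂).comp_const_add x V₁)
  refine hasFDerivAt_of_le_of_le lower upper (.of_forall fun W => ?_) ?_ (by simp [hx]) rfl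
  · simpa using (hVt V₁ hV₁).triplePerimeter_add_le hconv hdiff (Vt W V₂) W V₂
  · filter_upwards [lt_mem_nhds hV₁] with W hW
    exact (hVt W hW).triplePerimeter_le hconv hdiff x

lemma hasDerivAt_triplePerimeter_right (hconv : ConvexOn ℝ univ f) (hdiff : Differentiable ℝ f)
    (hVt : ∀ W, 0 < W → IsEquilibrium f (Vt V₁ W) V₁ W) (hV₂ : 0 < V₂) :
    HasDerivAt (fun W => triplePerimeter f (Vt V₁ W) V₁ W) (deriv f (Vt V₁ V₂ + V₁ + V₂)) V₂ := by
  set x := Vt V₁ V₂ with hx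
  have lower : HasDerivAt (fun W => triplePerimeter f x V₁ V₂
      + deriv f (x + V₁ + V₂) * (W - V₂)) (deriv f (x + V₁ + V₂)) V₂ := by
    simpa using (((hasDerivAt_id V₂).sub_const V₂).const_mul
      (deriv f (x + V₁ + V₂))).const_add (triplePerimeter f x V₁ V₂)
  have upper : HasDerivAt (fun W => triplePerimeter f x V₁ W) (deriv f (x + V₁ + V₂)) V₂ :=
    ((hdiff _).hasDerivAt.comp_const_add (x + V₁) V₂).const_add _
  refine hasFDerivAt_of_le_of_le lower upper (.of_forall fun W => ?_) ?_ (by simp [hx]) rfl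
  · simpa using (hVt V₂ hV₂).triplePerimeter_add_le hconv hdiff (Vt V₁ W) V₁ W
  · filter_upwards [lt_mem_nhds hV₂] with W hW
    exact (hVt W hW).triplePerimeter_le hconv hdiff x

lemma continuousAt_mu_left (hconv : ConvexOn ℝ univ f) (hdiff : Differentiable ℝ f)
    (hVt : ∀ W, 0 < W → IsEquilibrium f (Vt W V₂) W V₂) (hV₁ : 0 < V₁) :
    ContinuousAt (fun W => mu f Vt W V₂) V₁ := by
  have hcont := hdiff.continuous
  simp only [mu_eq_sub_triplePerimeter]
  exact ContinuousAt.sub (by fun_prop)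
    (hasDerivAt_triplePerimeter_left hconv hdiff hVt hV₁).continuousAt

lemma hasDerivAt_mu_right (hconv : ConvexOn ℝ univ f) (hdiff : Differentiable ℝ f)
    (hVt : ∀ W, 0 < W → IsEquilibrium f (Vt V₁ W) V₁ W) (hV₂ : 0 < V₂) :
    HasDerivAt (fun W => mu f Vt V₁ W)
      (deriv f ((V₁ + V₂) / 2) - deriv f (Vt V₁ V₂ + V₁ + V₂)) V₂ := by
  have midpoint : HasDerivAt (fun W => (V₁ + W) / 2) (1 / 2) V₂ :=
    ((hasDerivAt_id V₂).const_add V₁).div_const 2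
  have double : HasDerivAt (fun W => 2 * f (V₁ / 2) + 2 * f ((V₁ + W) / 2))
      (deriv f ((V₁ + V₂) / 2)) V₂ :=
    (((hdiff _).hasDerivAt.comp V₂ midpoint).const_mul 2).const_add (2 * f (V₁ / 2))
      |>.congr_deriv (by ring)
  simp only [mu_eq_sub_triplePerimeter]
  exact double.sub (hasDerivAt_triplePerimeter_right hconv hdiff hVt hV₂)

lemma strictAntiOn_mu_right (heven : f.Even) (hconv : StrictConvexOn ℝ univ f)
    (hdiff : Differentiable ℝ f) (hV₁ : 0 < V₁)
    (hVt : ∀ W, 0 < W → IsEquilibrium f (Vt V₁ W) V₁ W) :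
    StrictAntiOn (fun W => mu f Vt V₁ W) (Ici V₁) := by
  have hmono : StrictMono (deriv f) :=
    strictMonoOn_univ.1 (hconv.strictMonoOn_deriv fun x _ => hdiff x)
  have hderiv {W : ℝ} (hW : V₁ ≤ W) :=
    hasDerivAt_mu_right hconv.convexOn hdiff hVt (hV₁.trans_le hW)
  refine strictAntiOn_of_deriv_neg (convex_Ici V₁)
    (fun W hW => (hderiv hW).continuousAt.continuousWithinAt) fun W hW => ?_
  rw [interior_Ici, mem_Ioi] at hW
  have hlower := (hVt W (hV₁.trans hW)).neg_half_add_lt heven hmono hW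
  rw [(hderiv hW.le).deriv, sub_neg]
  exact hmono (by linarith)

end PerimeterDifference

lemma mu_sSup_blowupSet_nonneg {f : ℝ → ℝ} {Vt : ℝ → ℝ → ℝ} {M : ℝ}
    (hbdd : BddAbove (blowupSet f Vt)) (hpos : 0 < sSup (blowupSet f Vt))
    (hM : sSup (blowupSet f Vt) < M)
    (hcont : ContinuousAt (fun W => mu f Vt W M) (sSup (blowupSet f Vt))) :
    0 ≤ mu f Vt (sSup (blowupSet f Vt)) M := by
  by_contra! hneg
  have hevent : ∀ᶠ W in 𝓝[>] sSup (blowupSet f Vt), mu f Vt W M < 0 :=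
    (hcont.eventually_lt_const hneg).filter_mono nhdsWithin_le_nhds
  obtain ⟨W, hWneg, hW⟩ := (hevent.and (Ioo_mem_nhdsGT hM)).exists
  have hmem : W ∈ blowupSet f Vt := ⟨hpos.trans hW.1, M, hW.2.le, hWneg⟩
  exact (le_csSup hbdd hmem).not_gt hW.1

lemma mu_sSup_blowupSet_pos {f : ℝ → ℝ} {Vt : ℝ → ℝ → ℝ} {M : ℝ}
    (heven : f.Even) (hconv : StrictConvexOn ℝ univ f) (hdiff : Differentiable ℝ f)
    (hVt : ∀ V₁ V₂, 0 < V₁ → 0 < V₂ → IsEquilibrium f (Vt V₁ V₂) V₁ V₂)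
    (hbdd : BddAbove (blowupSet f Vt)) (hpos : 0 < sSup (blowupSet f Vt))
    (hM : sSup (blowupSet f Vt) < M) :
    0 < mu f Vt (sSup (blowupSet f Vt)) M := by
  have hM' : sSup (blowupSet f Vt) < M + 1 := hM.trans (lt_add_one M)
  have hcont := continuousAt_mu_left hconv.convexOn hdiff
    (fun W hW => hVt W (M + 1) hW (hpos.trans hM')) hpos
  calc 0 ≤ mu f Vt (sSup (blowupSet f Vt)) (M + 1) :=
        mu_sSup_blowupSet_nonneg hbdd hpos hM' hcont
    _ < mu f Vt (sSup (blowupSet f Vt)) M :=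
        strictAntiOn_mu_right heven hconv hdiff hpos (fun W => hVt _ W hpos) hM.le hM'.le
          (lt_add_one M)

theorem stmt_14_general (f : ℝ → ℝ)
    (hf_even : ∀ x, f (-x) = f x)
    (hf_conv : StrictConvexOn ℝ Set.univ f)
    (hf_diff : Differentiable ℝ f)
    (Vt : ℝ → ℝ → ℝ)
    (hVt : ∀ V₁ V₂ : ℝ, 0 < V₁ → 0 < V₂ →
      deriv f (Vt V₁ V₂) + deriv f (Vt V₁ V₂ + V₁) + deriv f (Vt V₁ V₂ + V₁ + V₂) = 0)
    (hne : (blowupSet f Vt).Nonempty)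
    (hbdd : BddAbove (blowupSet f Vt))
    (lam : ℝ → ℝ)
    (hlam : ∀ V₁ ∈ Set.Ioo 0 (sSup (blowupSet f Vt)),
      V₁ < lam V₁ ∧ mu f Vt V₁ (lam V₁) = 0) :
    Tendsto lam
      (nhdsWithin (sSup (blowupSet f Vt)) (Set.Iio (sSup (blowupSet f Vt))))
      atTop := by
  have hpos : 0 < sSup (blowupSet f Vt) := by
    obtain ⟨W, hW⟩ := hne
    exact hW.1.trans_le (le_csSup hbdd hW)
  refine (atTop_basis_Ioi' (sSup (blowupSet f Vt))).tendsto_right_iff.2 fun M hM => ?_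
  have hmuM : 0 < mu f Vt (sSup (blowupSet f Vt)) M :=
    mu_sSup_blowupSet_pos hf_even hf_conv hf_diff hVt hbdd hpos hM
  have hcont : ContinuousAt (fun W => mu f Vt W M) (sSup (blowupSet f Vt)) :=
    continuousAt_mu_left hf_conv.convexOn hf_diff (fun W hW => hVt W M hW (hpos.trans hM)) hpos
  filter_upwards [(hcont.eventually_const_lt hmuM).filter_mono nhdsWithin_le_nhds,
    Ioo_mem_nhdsLT hpos] with V₁ hmu hV₁
  obtain ⟨hlt, htie⟩ := hlam V₁ hV₁
  have hanti := strictAntiOn_mu_right hf_even hf_conv hf_diff hV₁.1 (fun W => hVt V₁ W hV₁.1)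
  exact (hanti.lt_iff_gt hlt.le (hV₁.2.trans hM).le).1 (htie.trans_lt hmu)

/-- Assume 0 < V₀ < ∞ (the blowup set is nonempty and bounded above,
so V₀ = sSup of the blowup set is a positive real), and let λ : (0, V₀) → ℝ be the
tie function assigning to each V₁ ∈ (0, V₀) the unique λ(V₁) > V₁ with
μ(V₁, λ(V₁)) = 0. Then λ(V₁) → ∞ as V₁ → V₀⁻. -/
theorem stmt_14 (f : ℝ → ℝ)
    (hf_even : ∀ x, f (-x) = f x)
    (hf_conv : StrictConvexOn ℝ Set.univ f)
    (hf_smooth : ContDiff ℝ 1 f)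
    (hf_pos : ∀ x, 0 < f x)
    (Vt : ℝ → ℝ → ℝ)
    (hVt : ∀ V₁ V₂ : ℝ, 0 < V₁ → 0 < V₂ →
      deriv f (Vt V₁ V₂) + deriv f (Vt V₁ V₂ + V₁) + deriv f (Vt V₁ V₂ + V₁ + V₂) = 0)
    (hne : (blowupSet f Vt).Nonempty)
    (hbdd : BddAbove (blowupSet f Vt))
    (lam : ℝ → ℝ)
    (hlam : ∀ V₁ ∈ Set.Ioo 0 (sSup (blowupSet f Vt)),
      V₁ < lam V₁ ∧ mu f Vt V₁ (lam V₁) = 0) :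
    Tendsto lam
      (nhdsWithin (sSup (blowupSet f Vt)) (Set.Iio (sSup (blowupSet f Vt))))
      atTop :=
  stmt_14_general f hf_even hf_conv (hf_smooth.differentiable one_ne_zero) Vt hVt hne hbdd
    lam hlam
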